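/- There exists a constant C > 0 with the following property. Let T := [a₁, a₁+h_x] × [a₂, a₂+h_y] be an axis-aligned rectangle with h_x, h_y > 0, and let v be of class C³ on an open neighbourhood of T. Let v^I be the unique polynomial of degree at most 2 in each variable that agrees with v at the nine nodes (a₁ + i·h_x/2, a₂ + j·h_y/2), i, j ∈ {0,1,2}. Then ( ∫_{a₂}^{a₂+h_y} ( |∂_x(v - v^I)(a₁,y)|² + |∂_x(v - v^I)(a₁+h_x,y)|² ) dy )^{1/2} ≤ C · ( h_x^{3/2} ‖∂_x³ v‖_{L²(T)} + h_x^{1/2} h_y ‖∂_x²∂_y v‖_{L²(T)} + h_y² h_x^{-1/2} ‖∂_x∂_y² v‖_{L²(T)} ). -/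

import Mathlib

open MeasureTheory
open scoped ENNReal

/-- Partial derivative in the first (`x`) coordinate. -/
noncomputable def pdx (f : ℝ × ℝ → ℝ) : ℝ × ℝ → ℝ := fun q => deriv (fun t => f (t, q.2)) q.1

/-- Partial derivative in the second (`y`) coordinate. -/
noncomputable def pdy (f : ℝ × ℝ → ℝ) : ℝ × ℝ → ℝ := fun q => deriv (fun t => f (q.1, t)) q.2

/-- `Dm (α₁, α₂) f = ∂_x^{α₁} ∂_y^{α₂} f`. -/
noncomputable def Dm (a : ℕ × ℕ) (f : ℝ × ℝ → ℝ) : ℝ × ℝ → ℝ := pdx^[a.1] (pdy^[a.2] f)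

/-- The `L^p` norm over a set `R ⊆ ℝ²` (with respect to Lebesgue measure). -/
noncomputable def LpN (p : ℝ≥0∞) (R : Set (ℝ × ℝ)) (f : ℝ × ℝ → ℝ) : ℝ≥0∞ :=
  eLpNorm f p (volume.restrict R)

/-- The reference square `Λ := [-1,1]²`. -/
def Lam : Set (ℝ × ℝ) := Set.Icc (-1, -1) (1, 1)

/-- The `L²` norm over a set `R ⊆ ℝ²`, as a real number `(∫_R f²)^{1/2}`. -/
noncomputable def L2R (R : Set (ℝ × ℝ)) (f : ℝ × ℝ → ℝ) : ℝ :=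
  Real.sqrt (∫ z in R, (f z) ^ 2)

/-!
The nodal interpolant is the tensor product of two quadratic interpolations on three equidistant
nodes, one in each variable. Let `D` be the functional sending a function of `x` to the derivative,
at the abscissa of a vertical line, of its quadratic interpolant. On that line the error splits as
`(∂ₓv - Dv) + (Dv - I_y Dv)`.

* The one-dimensional error `g = f - I f` vanishes at three points, so by Rolle's theorem `g'` has
  two zeros and `g''` one; integrating back, `|g'| ≤ h ∫ |f'''|`. This bounds the first summand by
  `∂ₓ³v`.
* `I_y` is stable and exact on affine functions, so `|ψ - I_y ψ| ≤ 2 h_y ∫ |ψ''|`. For `ψ = Dv` we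
  have `ψ'' = D(∂_y²v)`, and `D` annihilates constants, so `|D(∂_y²v)| ≤ (6 / h_x) ∫ |∂ₓ∂_y²v| dx`.

Squaring and the Cauchy–Schwarz inequality turn these `L¹` bounds into the `L²` estimate.
-/

open Set

section OneVariable

lemma norm_sub_le_setIntegral_norm_deriv {E : Type*} [NormedAddCommGroup E] [NormedSpace ℝ E]
    [CompleteSpace E] {a b : ℝ} {f f' : ℝ → E} (hf : ∀ x ∈ Icc a b, HasDerivAt f (f' x) x)
    (hc : ContinuousOn f' (Icc a b)) {s t : ℝ} (hs : s ∈ Icc a b) (ht : t ∈ Icc a b) :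
    ‖f t - f s‖ ≤ ∫ x in Icc a b, ‖f' x‖ := by
  have hsub : uIcc s t ⊆ Icc a b := uIcc_subset_Icc hs ht
  rw [← intervalIntegral.integral_eq_sub_of_hasDerivAt (fun x hx => hf x (hsub hx))
    (hc.mono hsub).intervalIntegrable]
  exact intervalIntegral.norm_integral_le_integral_norm_uIoc.trans <|
    setIntegral_mono_set hc.norm.integrableOn_Icc (.of_forall fun x => norm_nonneg _)
      (uIoc_subset_uIcc.trans hsub).eventuallyLE

lemma exists_deriv_eq_zero_mem_Ioo {a b : ℝ} {f f' : ℝ → ℝ}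
    (hf : ∀ x ∈ Icc a b, HasDerivAt f (f' x) x) {s t : ℝ} (hs : s ∈ Icc a b) (ht : t ∈ Icc a b)
    (hst : s < t) (hfst : f s = f t) : ∃ ξ ∈ Ioo s t, f' ξ = 0 :=
  have hsub : Icc s t ⊆ Icc a b := Icc_subset_Icc hs.1 ht.2
  exists_hasDerivAt_eq_zero hst (HasDerivAt.continuousOn fun u hu => hf u (hsub hu)) hfst
    fun u hu => hf u (hsub (Ioo_subset_Icc_self hu))

lemma abs_le_of_two_zeros {a b : ℝ} {f f' f'' : ℝ → ℝ}
    (hf : ∀ x ∈ Icc a b, HasDerivAt f (f' x) x) (hf' : ∀ x ∈ Icc a b, HasDerivAt f' (f'' x) x)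
    (hc : ContinuousOn f'' (Icc a b)) {s t : ℝ} (hs : s ∈ Icc a b) (ht : t ∈ Icc a b)
    (hst : s < t) (hfs : f s = 0) (hft : f t = 0) {x : ℝ} (hx : x ∈ Icc a b) :
    |f x| ≤ (b - a) * ∫ u in Icc a b, |f'' u| := by
  obtain ⟨ξ, hξ, hf'ξ⟩ := exists_deriv_eq_zero_mem_Ioo hf hs ht hst (hfs.trans hft.symm)
  have hξ_mem : ξ ∈ Icc a b := ⟨hs.1.trans hξ.1.le, hξ.2.le.trans ht.2⟩
  have hf'_le : ∀ u ∈ Icc a b, ‖f' u‖ ≤ ∫ u in Icc a b, |f'' u| := fun u hu => by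
    simpa only [hf'ξ, sub_zero, Real.norm_eq_abs] using
      norm_sub_le_setIntegral_norm_deriv hf' hc hξ_mem hu
  calc |f x| = ‖f x - f s‖ := by rw [hfs, sub_zero, Real.norm_eq_abs]
    _ ≤ (∫ u in Icc a b, |f'' u|) * |x - s| :=
      (convex_Icc a b).norm_image_sub_le_of_norm_hasDerivWithin_le
        (fun u hu => (hf u hu).hasDerivWithinAt) hf'_le hs hx
    _ ≤ (∫ u in Icc a b, |f'' u|) * (b - a) := by
      gcongr
      exact abs_sub_le_iff.2 ⟨by linarith [hx.2, hs.1], by linarith [hx.1, hs.2]⟩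
    _ = (b - a) * ∫ u in Icc a b, |f'' u| := mul_comm _ _

lemma abs_deriv_le_of_three_zeros {a b : ℝ} {f f' f'' f''' : ℝ → ℝ}
    (hf : ∀ x ∈ Icc a b, HasDerivAt f (f' x) x) (hf' : ∀ x ∈ Icc a b, HasDerivAt f' (f'' x) x)
    (hf'' : ∀ x ∈ Icc a b, HasDerivAt f'' (f''' x) x) (hc : ContinuousOn f''' (Icc a b))
    {r s t : ℝ} (hr : r ∈ Icc a b) (ht : t ∈ Icc a b) (hrs : r < s) (hst : s < t)
    (hfr : f r = 0) (hfs : f s = 0) (hft : f t = 0) {x : ℝ} (hx : x ∈ Icc a b) :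
    |f' x| ≤ (b - a) * ∫ u in Icc a b, |f''' u| := by
  have hs : s ∈ Icc a b := ⟨hr.1.trans hrs.le, hst.le.trans ht.2⟩
  obtain ⟨ξ, hξ, hf'ξ⟩ := exists_deriv_eq_zero_mem_Ioo hf hr hs hrs (hfr.trans hfs.symm)
  obtain ⟨η, hη, hf'η⟩ := exists_deriv_eq_zero_mem_Ioo hf hs ht hst (hfs.trans hft.symm)
  exact abs_le_of_two_zeros hf' hf'' hc ⟨hr.1.trans hξ.1.le, hξ.2.le.trans hs.2⟩
    ⟨hs.1.trans hη.1.le, hη.2.le.trans ht.2⟩ (hξ.2.trans hη.1) hf'ξ hf'η hx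

end OneVariable

lemma sq_setIntegral_le {α : Type*} [MeasurableSpace α] {μ : Measure α} {s : Set α} {f : α → ℝ}
    (hs : μ s ≠ ∞) (hf : IntegrableOn f s μ) (hf2 : IntegrableOn (fun x => f x ^ 2) s μ) :
    (∫ x in s, f x ∂μ) ^ 2 ≤ μ.real s * ∫ x in s, f x ^ 2 ∂μ := by
  rcases eq_or_ne (μ s) 0 with h0 | h0
  · simp [Measure.restrict_eq_zero.2 h0]
  have hpos : 0 < μ.real s := ENNReal.toReal_pos h0 hs
  have jensen : (⨍ x in s, f x ∂μ) ^ 2 ≤ ⨍ x in s, f x ^ 2 ∂μ :=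
    (even_two.convexOn_pow (𝕜 := ℝ)).map_set_average_le (by fun_prop) isClosed_univ h0 hs
      (by simp) hf hf2
  rw [setAverage_eq, setAverage_eq, smul_eq_mul, smul_eq_mul, mul_pow] at jensen
  calc (∫ x in s, f x ∂μ) ^ 2
      = μ.real s ^ 2 * ((μ.real s)⁻¹ ^ 2 * (∫ x in s, f x ∂μ) ^ 2) := by field_simp
    _ ≤ μ.real s ^ 2 * ((μ.real s)⁻¹ * ∫ x in s, f x ^ 2 ∂μ) := by gcongr
    _ = μ.real s * ∫ x in s, f x ^ 2 ∂μ := by field_simp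

section QuadraticInterpolation

/-- The quadratic polynomial agreeing with `g` at `a`, `a + h / 2` and `a + h`, in Newton form. -/
noncomputable def quadInterp (a h : ℝ) (g : ℝ → ℝ) (x : ℝ) : ℝ :=
  g a + 2 * (g (a + h / 2) - g a) / h * (x - a) +
    2 * (g (a + h) - 2 * g (a + h / 2) + g a) / h ^ 2 * ((x - a) * (x - a - h / 2))

/-- The derivative at `x` of the quadratic interpolant `quadInterp a h g`. -/
noncomputable def quadInterpDeriv (a h : ℝ) (g : ℝ → ℝ) (x : ℝ) : ℝ :=
  2 * (g (a + h / 2) - g a) / h +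
    2 * (g (a + h) - 2 * g (a + h / 2) + g a) / h ^ 2 * (2 * (x - a) - h / 2)

variable {a h : ℝ}

lemma quadInterp_left (g : ℝ → ℝ) : quadInterp a h g a = g a := by simp [quadInterp]

lemma quadInterp_midpoint (hh : h ≠ 0) (g : ℝ → ℝ) :
    quadInterp a h g (a + h / 2) = g (a + h / 2) := by
  simp only [quadInterp]; field_simp; ring

lemma quadInterp_right (hh : h ≠ 0) (g : ℝ → ℝ) : quadInterp a h g (a + h) = g (a + h) := by
  simp only [quadInterp]; field_simp; ring

lemma quadInterp_congr {g₁ g₂ : ℝ → ℝ}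
    (hg : ∀ i : Fin 3, g₁ (a + (i : ℕ) * h / 2) = g₂ (a + (i : ℕ) * h / 2)) (x : ℝ) :
    quadInterp a h g₁ x = quadInterp a h g₂ x := by
  have h₀ : g₁ a = g₂ a := by simpa using hg 0
  have h₁ : g₁ (a + h / 2) = g₂ (a + h / 2) := by simpa using hg 1
  have h₂ : g₁ (a + h) = g₂ (a + h) := by simpa using hg 2
  simp only [quadInterp, h₀, h₁, h₂]

lemma quadInterp_quadratic (hh : h ≠ 0) (c : Fin 3 → ℝ) (x : ℝ) :
    quadInterp a h (fun t => ∑ i, c i * t ^ (i : ℕ)) x = ∑ i, c i * x ^ (i : ℕ) := by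
  simp only [quadInterp, Fin.sum_univ_three, Fin.val_zero, Fin.val_one, Fin.val_two]
  field_simp
  ring

lemma hasDerivAt_quadInterp (g : ℝ → ℝ) (x : ℝ) :
    HasDerivAt (quadInterp a h g) (quadInterpDeriv a h g x) x := by
  have hlin : HasDerivAt (fun x : ℝ => x - a) 1 x := (hasDerivAt_id x).sub_const a
  refine (((hlin.const_mul _).const_add (g a)).add
    ((hlin.mul (hlin.sub_const (h / 2))).const_mul _)).congr_deriv ?_
  simp only [quadInterpDeriv]
  ring

lemma hasDerivAt_quadInterpDeriv (g : ℝ → ℝ) (x : ℝ) :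
    HasDerivAt (quadInterpDeriv a h g)
      (2 * (g (a + h) - 2 * g (a + h / 2) + g a) / h ^ 2 * 2) x := by
  have hlin : HasDerivAt (fun x : ℝ => 2 * (x - a) - h / 2) 2 x := by
    simpa using (((hasDerivAt_id x).sub_const a).const_mul 2).sub_const (h / 2)
  exact (hlin.const_mul _).const_add _

variable {f f' f'' f''' : ℝ → ℝ}

lemma abs_deriv_sub_quadInterpDeriv_le (hh : 0 < h)
    (hf : ∀ x ∈ Icc a (a + h), HasDerivAt f (f' x) x)
    (hf' : ∀ x ∈ Icc a (a + h), HasDerivAt f' (f'' x) x)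
    (hf'' : ∀ x ∈ Icc a (a + h), HasDerivAt f'' (f''' x) x)
    (hc : ContinuousOn f''' (Icc a (a + h))) {x : ℝ} (hx : x ∈ Icc a (a + h)) :
    |f' x - quadInterpDeriv a h f x| ≤ h * ∫ u in Icc a (a + h), |f''' u| := by
  simpa only [add_sub_cancel_left] using abs_deriv_le_of_three_zeros
    (f := fun x => f x - quadInterp a h f x) (f' := fun x => f' x - quadInterpDeriv a h f x)
    (fun x hx => (hf x hx).sub (hasDerivAt_quadInterp f x))
    (fun x hx => (hf' x hx).sub (hasDerivAt_quadInterpDeriv f x))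
    (fun x hx => (hf'' x hx).sub_const _) hc
    (r := a) (s := a + h / 2) (t := a + h)
    (left_mem_Icc.2 (by linarith)) (right_mem_Icc.2 (by linarith)) (by linarith) (by linarith)
    (sub_eq_zero.2 (quadInterp_left f).symm) (sub_eq_zero.2 (quadInterp_midpoint hh.ne' f).symm)
    (sub_eq_zero.2 (quadInterp_right hh.ne' f).symm) hx

/-- The error of the affine interpolant of `f` at the end points of `[a, a + h]`. -/
noncomputable def affineInterpError (a h : ℝ) (f : ℝ → ℝ) (x : ℝ) : ℝ :=
  f x - (f a + (f (a + h) - f a) / h * (x - a))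

lemma abs_affineInterpError_le (hh : 0 < h)
    (hf : ∀ x ∈ Icc a (a + h), HasDerivAt f (f' x) x)
    (hf' : ∀ x ∈ Icc a (a + h), HasDerivAt f' (f'' x) x)
    (hc : ContinuousOn f'' (Icc a (a + h))) {x : ℝ} (hx : x ∈ Icc a (a + h)) :
    |affineInterpError a h f x| ≤ h * ∫ u in Icc a (a + h), |f'' u| := by
  have hlin : ∀ x, HasDerivAt (fun x => f a + (f (a + h) - f a) / h * (x - a))
      ((f (a + h) - f a) / h) x := fun x => by
    simpa using (((hasDerivAt_id x).sub_const a).const_mul ((f (a + h) - f a) / h)).const_add (f a)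
  simpa only [add_sub_cancel_left] using abs_le_of_two_zeros (f := affineInterpError a h f)
    (fun x hx => (hf x hx).sub (hlin x)) (fun x hx => (hf' x hx).sub_const _) hc
    (left_mem_Icc.2 (by linarith)) (right_mem_Icc.2 (by linarith)) (by linarith)
    (by simp [affineInterpError]) (by simp [affineInterpError, hh.ne']) hx

lemma sub_quadInterp_eq_affineInterpError (hh : h ≠ 0) (f : ℝ → ℝ) (x : ℝ) :
    f x - quadInterp a h f x = affineInterpError a h f x -
      4 * ((x - a) / h) * (1 - (x - a) / h) * affineInterpError a h f (a + h / 2) := by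
  simp only [quadInterp, affineInterpError]
  field_simp
  ring

lemma abs_sub_quadInterp_le (hh : 0 < h)
    (hf : ∀ x ∈ Icc a (a + h), HasDerivAt f (f' x) x)
    (hf' : ∀ x ∈ Icc a (a + h), HasDerivAt f' (f'' x) x)
    (hc : ContinuousOn f'' (Icc a (a + h))) {x : ℝ} (hx : x ∈ Icc a (a + h)) :
    |f x - quadInterp a h f x| ≤ 2 * h * ∫ u in Icc a (a + h), |f'' u| := by
  have hbubble : |4 * ((x - a) / h) * (1 - (x - a) / h)| ≤ 1 := by
    have h₀ : 0 ≤ (x - a) / h := div_nonneg (by linarith [hx.1]) hh.le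
    have h₁ : (x - a) / h ≤ 1 := (div_le_one hh).2 (by linarith [hx.2])
    rw [abs_of_nonneg (mul_nonneg (by positivity) (by linarith))]
    nlinarith [sq_nonneg (2 * ((x - a) / h) - 1)]
  have hmid : a + h / 2 ∈ Icc a (a + h) := ⟨by linarith, by linarith⟩
  rw [sub_quadInterp_eq_affineInterpError hh.ne']
  calc |affineInterpError a h f x -
        4 * ((x - a) / h) * (1 - (x - a) / h) * affineInterpError a h f (a + h / 2)|
      ≤ |affineInterpError a h f x| +
        |4 * ((x - a) / h) * (1 - (x - a) / h)| * |affineInterpError a h f (a + h / 2)| := by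
        rw [← abs_mul]; exact abs_sub _ _
    _ ≤ h * (∫ u in Icc a (a + h), |f'' u|) + 1 * (h * ∫ u in Icc a (a + h), |f'' u|) := by
        gcongr
        · exact abs_affineInterpError_le hh hf hf' hc hx
        · exact abs_affineInterpError_le hh hf hf' hc hmid
    _ = 2 * h * ∫ u in Icc a (a + h), |f'' u| := by ring

lemma quadInterpDeriv_eq_increments (hh : h ≠ 0) (g : ℝ → ℝ) (x : ℝ) :
    quadInterpDeriv a h g x = ((3 - 4 * ((x - a) / h)) * (g (a + h / 2) - g a) +
      (4 * ((x - a) / h) - 1) * (g (a + h) - g (a + h / 2))) / h := by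
  simp only [quadInterpDeriv]
  field_simp
  ring

lemma abs_quadInterpDeriv_le (hh : 0 < h) (hf : ∀ x ∈ Icc a (a + h), HasDerivAt f (f' x) x)
    (hc : ContinuousOn f' (Icc a (a + h))) {x : ℝ} (hx : x ∈ Icc a (a + h)) :
    |quadInterpDeriv a h f x| ≤ 6 / h * ∫ u in Icc a (a + h), |f' u| := by
  have h₀ : 0 ≤ (x - a) / h := div_nonneg (by linarith [hx.1]) hh.le
  have h₁ : (x - a) / h ≤ 1 := (div_le_one hh).2 (by linarith [hx.2])
  have hleft : a ∈ Icc a (a + h) := ⟨le_rfl, by linarith⟩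
  have hmid : a + h / 2 ∈ Icc a (a + h) := ⟨by linarith, by linarith⟩
  have hright : a + h ∈ Icc a (a + h) := ⟨by linarith, le_rfl⟩
  rw [quadInterpDeriv_eq_increments hh.ne', abs_div, abs_of_pos hh, div_le_iff₀ hh]
  calc |(3 - 4 * ((x - a) / h)) * (f (a + h / 2) - f a) +
        (4 * ((x - a) / h) - 1) * (f (a + h) - f (a + h / 2))|
      ≤ |3 - 4 * ((x - a) / h)| * |f (a + h / 2) - f a| +
        |4 * ((x - a) / h) - 1| * |f (a + h) - f (a + h / 2)| := by
        rw [← abs_mul, ← abs_mul]; exact abs_add_le _ _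
    _ ≤ 3 * (∫ u in Icc a (a + h), |f' u|) + 3 * ∫ u in Icc a (a + h), |f' u| := by
        gcongr
        · exact abs_le.2 ⟨by linarith, by linarith⟩
        · exact norm_sub_le_setIntegral_norm_deriv hf hc hleft hmid
        · exact abs_le.2 ⟨by linarith, by linarith⟩
        · exact norm_sub_le_setIntegral_norm_deriv hf hc hmid hright
    _ = 6 / h * (∫ u in Icc a (a + h), |f' u|) * h := by field_simp; ring

lemma hasDerivAt_quadInterp_param {F : ℝ → ℝ → ℝ} {F' : ℝ → ℝ} {t : ℝ}
    (hF : ∀ i : Fin 3, HasDerivAt (fun t => F t (a + (i : ℕ) * h / 2)) (F' (a + (i : ℕ) * h / 2)) t)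
    (x : ℝ) : HasDerivAt (fun t => quadInterp a h (F t) x) (quadInterp a h F' x) t := by
  have h₀ : HasDerivAt (fun t => F t a) (F' a) t := by simpa using hF 0
  have h₁ : HasDerivAt (fun t => F t (a + h / 2)) (F' (a + h / 2)) t := by simpa using hF 1
  have h₂ : HasDerivAt (fun t => F t (a + h)) (F' (a + h)) t := by simpa using hF 2
  exact (h₀.add ((((h₁.sub h₀).const_mul 2).div_const h).mul_const (x - a))).add
    (((((h₂.sub (h₁.const_mul 2)).add h₀).const_mul 2).div_const (h ^ 2)).mul_const _)

lemma hasDerivAt_quadInterpDeriv_param {F : ℝ → ℝ → ℝ} {F' : ℝ → ℝ} {t : ℝ} (hh : 0 ≤ h)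
    (hF : ∀ s ∈ Icc a (a + h), HasDerivAt (fun t => F t s) (F' s) t) (x : ℝ) :
    HasDerivAt (fun t => quadInterpDeriv a h (F t) x) (quadInterpDeriv a h F' x) t := by
  have h₀ := hF a ⟨le_rfl, by linarith⟩
  have h₁ := hF (a + h / 2) ⟨by linarith, by linarith⟩
  have h₂ := hF (a + h) ⟨by linarith, le_rfl⟩
  exact (((h₁.sub h₀).const_mul 2).div_const h).add
    (((((h₂.sub (h₁.const_mul 2)).add h₀).const_mul 2).div_const (h ^ 2)).mul_const _)

lemma continuousOn_quadInterpDeriv_param {F : ℝ → ℝ → ℝ} {s : Set ℝ} (hh : 0 ≤ h)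
    (hF : ∀ u ∈ Icc a (a + h), ContinuousOn (fun t => F t u) s) (x : ℝ) :
    ContinuousOn (fun t => quadInterpDeriv a h (F t) x) s := by
  have h₀ := hF a ⟨le_rfl, by linarith⟩
  have h₁ := hF (a + h / 2) ⟨by linarith, by linarith⟩
  have h₂ := hF (a + h) ⟨by linarith, le_rfl⟩
  unfold quadInterpDeriv
  fun_prop

end QuadraticInterpolation

section Slices

variable {X Y Z : Type*} [TopologicalSpace X] [TopologicalSpace Y] [TopologicalSpace Z]
  {f : X × Y → Z} {U : Set (X × Y)}

lemma continuousOn_slice_fst (hf : ContinuousOn f U) {s : Set X} {y : Y}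
    (hs : ∀ x ∈ s, (x, y) ∈ U) : ContinuousOn (fun x => f (x, y)) s :=
  hf.comp (by fun_prop) hs

lemma continuousOn_slice_snd (hf : ContinuousOn f U) {s : Set Y} {x : X}
    (hs : ∀ y ∈ s, (x, y) ∈ U) : ContinuousOn (fun y => f (x, y)) s :=
  hf.comp (by fun_prop) hs

end Slices

section PartialDerivatives

variable {f : ℝ × ℝ → ℝ} {U : Set (ℝ × ℝ)} {x y : ℝ}

lemma hasDerivAt_fst_of_differentiableAt (hf : DifferentiableAt ℝ f (x, y)) :
    HasDerivAt (fun t => f (t, y)) (fderiv ℝ f (x, y) (1, 0)) x :=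
  hf.hasFDerivAt.comp_hasDerivAt x ((hasDerivAt_id x).prodMk (hasDerivAt_const x y))

lemma hasDerivAt_snd_of_differentiableAt (hf : DifferentiableAt ℝ f (x, y)) :
    HasDerivAt (fun t => f (x, t)) (fderiv ℝ f (x, y) (0, 1)) y :=
  hf.hasFDerivAt.comp_hasDerivAt y ((hasDerivAt_const y x).prodMk (hasDerivAt_id y))

lemma hasDerivAt_pdx (hf : DifferentiableAt ℝ f (x, y)) :
    HasDerivAt (fun t => f (t, y)) (pdx f (x, y)) x :=
  (hasDerivAt_fst_of_differentiableAt hf).differentiableAt.hasDerivAt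

lemma hasDerivAt_pdy (hf : DifferentiableAt ℝ f (x, y)) :
    HasDerivAt (fun t => f (x, t)) (pdy f (x, y)) y :=
  (hasDerivAt_snd_of_differentiableAt hf).differentiableAt.hasDerivAt

variable {m n : WithTop ℕ∞}

lemma contDiffOn_pdx (hU : IsOpen U) (hf : ContDiffOn ℝ n f U) (hmn : m + 1 ≤ n) :
    ContDiffOn ℝ m (pdx f) U := by
  have hn : n ≠ 0 := by rintro rfl; simp at hmn
  refine ((hf.fderiv_of_isOpen hU hmn).clm_apply (contDiffOn_const (c := (1, 0)))).congr ?_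
  exact fun z hz => (hasDerivAt_fst_of_differentiableAt
    ((hf.differentiableOn hn).differentiableAt (hU.mem_nhds hz))).deriv

lemma contDiffOn_pdy (hU : IsOpen U) (hf : ContDiffOn ℝ n f U) (hmn : m + 1 ≤ n) :
    ContDiffOn ℝ m (pdy f) U := by
  have hn : n ≠ 0 := by rintro rfl; simp at hmn
  refine ((hf.fderiv_of_isOpen hU hmn).clm_apply (contDiffOn_const (c := (0, 1)))).congr ?_
  exact fun z hz => (hasDerivAt_snd_of_differentiableAt
    ((hf.differentiableOn hn).differentiableAt (hU.mem_nhds hz))).deriv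

lemma contDiffOn_iterate_pdx (hU : IsOpen U) (k : ℕ) (hf : ContDiffOn ℝ (m + k) f U) :
    ContDiffOn ℝ m (pdx^[k] f) U := by
  induction k generalizing f with
  | zero => simpa using hf
  | succ k ih => exact ih (contDiffOn_pdx hU hf (by push_cast; rw [add_assoc]))

lemma contDiffOn_iterate_pdy (hU : IsOpen U) (k : ℕ) (hf : ContDiffOn ℝ (m + k) f U) :
    ContDiffOn ℝ m (pdy^[k] f) U := by
  induction k generalizing f with
  | zero => simpa using hf
  | succ k ih => exact ih (contDiffOn_pdy hU hf (by push_cast; rw [add_assoc]))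

lemma continuousOn_Dm (hU : IsOpen U) (hf : ContDiffOn ℝ n f U) {k : ℕ × ℕ}
    (hk : (k.1 : WithTop ℕ∞) + k.2 ≤ n) : ContinuousOn (Dm k f) U :=
  (contDiffOn_iterate_pdx (m := 0) hU k.1
    (contDiffOn_iterate_pdy hU k.2 (hf.of_le (by rwa [zero_add])))).continuousOn

end PartialDerivatives

section IteratedIntegrals

variable {α β : Type*} [MeasurableSpace α] [MeasurableSpace β] {μ : Measure α} {ν : Measure β}
  [SFinite μ] [SFinite ν] {E : Type*} [NormedAddCommGroup E] [NormedSpace ℝ E] {s : Set α}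
  {t : Set β} {f : α × β → E}

lemma integrableOn_setIntegral_fst (hf : IntegrableOn f (s ×ˢ t) (μ.prod ν)) :
    IntegrableOn (fun y => ∫ x in s, f (x, y) ∂μ) t ν := by
  rw [IntegrableOn, ← Measure.prod_restrict] at hf
  exact hf.integral_prod_right

lemma setIntegral_prod_symm (hf : IntegrableOn f (s ×ˢ t) (μ.prod ν)) :
    ∫ z in s ×ˢ t, f z ∂μ.prod ν = ∫ y in t, ∫ x in s, f (x, y) ∂μ ∂ν := by
  rw [IntegrableOn, ← Measure.prod_restrict] at hf
  rw [← Measure.prod_restrict, integral_prod_symm f hf]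

end IteratedIntegrals

lemma volume_real_Icc_prod_Icc {a₁ a₂ hx hy : ℝ} (hhx : 0 ≤ hx) (hhy : 0 ≤ hy) :
    volume.real (Icc a₁ (a₁ + hx) ×ˢ Icc a₂ (a₂ + hy)) = hx * hy := by
  rw [Measure.volume_eq_prod, measureReal_prod_prod, Real.volume_real_Icc_of_le (by linarith),
    Real.volume_real_Icc_of_le (by linarith), add_sub_cancel_left, add_sub_cancel_left]

section BiquadraticInterpolation

/-- `q` is the biquadratic nodal interpolant of `v` on the rectangle
`[a₁, a₁ + hx] × [a₂, a₂ + hy]`: a polynomial of degree at most `2` in each variable which agrees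
with `v` at the vertices, the edge midpoints and the centre. -/
def IsBiquadraticInterpolant (a₁ a₂ hx hy : ℝ) (v q : ℝ × ℝ → ℝ) : Prop :=
  (∃ co : Fin 3 → Fin 3 → ℝ,
    q = fun z => ∑ i : Fin 3, ∑ j : Fin 3, co i j * z.1 ^ (i : ℕ) * z.2 ^ (j : ℕ)) ∧
  ∀ i j : Fin 3, q (a₁ + (i : ℕ) * hx / 2, a₂ + (j : ℕ) * hy / 2) =
    v (a₁ + (i : ℕ) * hx / 2, a₂ + (j : ℕ) * hy / 2)

variable {a₁ a₂ hx hy : ℝ} {v q : ℝ × ℝ → ℝ}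

lemma IsBiquadraticInterpolant.eq_quadInterp_quadInterp (hhx : hx ≠ 0) (hhy : hy ≠ 0)
    (hq : IsBiquadraticInterpolant a₁ a₂ hx hy v q) (x y : ℝ) :
    q (x, y) = quadInterp a₂ hy (fun t => quadInterp a₁ hx (fun s => v (s, t)) x) y := by
  obtain ⟨⟨co, rfl⟩, hn⟩ := hq
  set q : ℝ × ℝ → ℝ :=
    fun z => ∑ i : Fin 3, ∑ j : Fin 3, co i j * z.1 ^ (i : ℕ) * z.2 ^ (j : ℕ) with hq
  have q_fst (s t : ℝ) : q (s, t) = ∑ i, (∑ j, co i j * t ^ (j : ℕ)) * s ^ (i : ℕ) := by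
    simp only [hq, Finset.sum_mul, mul_right_comm]
  have q_snd (s t : ℝ) : q (s, t) = ∑ j, (∑ i, co i j * s ^ (i : ℕ)) * t ^ (j : ℕ) := by
    simp only [hq, Finset.sum_mul]
    exact Finset.sum_comm
  have exact_fst (t : ℝ) : quadInterp a₁ hx (fun s => q (s, t)) x = q (x, t) := by
    simpa only [q_fst] using quadInterp_quadratic hhx (fun i => ∑ j, co i j * t ^ (j : ℕ)) x
  have exact_snd : quadInterp a₂ hy (fun t => q (x, t)) y = q (x, y) := by
    simpa only [q_snd] using quadInterp_quadratic hhy (fun j => ∑ i, co i j * x ^ (i : ℕ)) y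
  calc q (x, y) = quadInterp a₂ hy (fun t => q (x, t)) y := exact_snd.symm
    _ = quadInterp a₂ hy (fun t => quadInterp a₁ hx (fun s => q (s, t)) x) y := by
      simp only [exact_fst]
    _ = quadInterp a₂ hy (fun t => quadInterp a₁ hx (fun s => v (s, t)) x) y :=
      quadInterp_congr (fun j => quadInterp_congr (fun i => hn i j) x) y

lemma IsBiquadraticInterpolant.pdx_sub (hhx : hx ≠ 0) (hhy : hy ≠ 0)
    (hq : IsBiquadraticInterpolant a₁ a₂ hx hy v q) {x y : ℝ}
    (hv : DifferentiableAt ℝ v (x, y)) :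
    pdx (fun z => v z - q z) (x, y) = pdx v (x, y) -
      quadInterp a₂ hy (fun t => quadInterpDeriv a₁ hx (fun s => v (s, t)) x) y := by
  have hq_deriv : HasDerivAt (fun s => q (s, y))
      (quadInterp a₂ hy (fun t => quadInterpDeriv a₁ hx (fun s => v (s, t)) x) y) x := by
    simp only [hq.eq_quadInterp_quadInterp hhx hhy]
    exact hasDerivAt_quadInterp_param (fun t => hasDerivAt_quadInterp _ x) y
  exact ((hasDerivAt_pdx hv).sub hq_deriv).deriv

variable {U : Set (ℝ × ℝ)}

lemma abs_pdx_sub_quadInterpDeriv_le (hhx : 0 < hx) (hU : IsOpen U) (hv : ContDiffOn ℝ 3 v U)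
    {x y : ℝ} (hline : ∀ s ∈ Icc a₁ (a₁ + hx), (s, y) ∈ U) (hx_mem : x ∈ Icc a₁ (a₁ + hx)) :
    |pdx v (x, y) - quadInterpDeriv a₁ hx (fun s => v (s, y)) x| ≤
      hx * ∫ s in Icc a₁ (a₁ + hx), |Dm (3, 0) v (s, y)| := by
  have hvx : ContDiffOn ℝ 2 (pdx v) U := contDiffOn_pdx hU hv (by norm_num)
  have hvxx : ContDiffOn ℝ 1 (pdx (pdx v)) U := contDiffOn_pdx hU hvx (by norm_num)
  have hasDeriv {f : ℝ × ℝ → ℝ} {n : WithTop ℕ∞} (hf : ContDiffOn ℝ n f U) (hn : n ≠ 0) :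
      ∀ s ∈ Icc a₁ (a₁ + hx), HasDerivAt (fun s => f (s, y)) (pdx f (s, y)) s := fun s hs =>
    hasDerivAt_pdx ((hf.differentiableOn hn).differentiableAt (hU.mem_nhds (hline s hs)))
  exact abs_deriv_sub_quadInterpDeriv_le hhx (hasDeriv hv (by norm_num))
    (hasDeriv hvx (by norm_num)) (hasDeriv hvxx (by norm_num))
    (continuousOn_slice_fst (continuousOn_Dm (k := (3, 0)) hU hv (by norm_num)) hline) hx_mem

lemma setIntegral_abs_quadInterpDeriv_le (hhx : 0 < hx) (hU : IsOpen U)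
    (hT : Icc a₁ (a₁ + hx) ×ˢ Icc a₂ (a₂ + hy) ⊆ U) (hv : ContDiffOn ℝ 1 v U) {x : ℝ}
    (hx_mem : x ∈ Icc a₁ (a₁ + hx)) :
    ∫ t in Icc a₂ (a₂ + hy), |quadInterpDeriv a₁ hx (fun s => v (s, t)) x| ≤
      6 / hx * ∫ z in Icc a₁ (a₁ + hx) ×ˢ Icc a₂ (a₂ + hy), |pdx v z| := by
  have hvx : ContinuousOn (pdx v) (Icc a₁ (a₁ + hx) ×ˢ Icc a₂ (a₂ + hy)) :=
    (contDiffOn_pdx (m := 0) hU hv (by norm_num)).continuousOn.mono hT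
  have hintegrable : IntegrableOn (fun z => |pdx v z|)
      (Icc a₁ (a₁ + hx) ×ˢ Icc a₂ (a₂ + hy)) (volume.prod volume) :=
    hvx.abs.integrableOn_compact (isCompact_Icc.prod isCompact_Icc)
  have hcont : ContinuousOn (fun t => quadInterpDeriv a₁ hx (fun s => v (s, t)) x)
      (Icc a₂ (a₂ + hy)) := continuousOn_quadInterpDeriv_param hhx.le
    (fun s hs => continuousOn_slice_snd hv.continuousOn fun t ht => hT ⟨hs, ht⟩) x
  have hpointwise : ∀ t ∈ Icc a₂ (a₂ + hy), |quadInterpDeriv a₁ hx (fun s => v (s, t)) x| ≤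
      6 / hx * ∫ s in Icc a₁ (a₁ + hx), |pdx v (s, t)| := fun t ht =>
    abs_quadInterpDeriv_le hhx
      (fun s hs => hasDerivAt_pdx
        ((hv.differentiableOn one_ne_zero).differentiableAt (hU.mem_nhds (hT ⟨hs, ht⟩))))
      (continuousOn_slice_fst hvx fun s hs => ⟨hs, ht⟩) hx_mem
  calc ∫ t in Icc a₂ (a₂ + hy), |quadInterpDeriv a₁ hx (fun s => v (s, t)) x|
      ≤ ∫ t in Icc a₂ (a₂ + hy), 6 / hx * ∫ s in Icc a₁ (a₁ + hx), |pdx v (s, t)| :=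
        setIntegral_mono_on hcont.abs.integrableOn_Icc
          ((integrableOn_setIntegral_fst hintegrable).const_mul _) measurableSet_Icc hpointwise
    _ = 6 / hx * ∫ z in Icc a₁ (a₁ + hx) ×ˢ Icc a₂ (a₂ + hy), |pdx v z| := by
        rw [integral_const_mul, Measure.volume_eq_prod, setIntegral_prod_symm hintegrable]

lemma abs_quadInterpDeriv_sub_quadInterp_le (hhx : 0 < hx) (hhy : 0 < hy) (hU : IsOpen U)
    (hT : Icc a₁ (a₁ + hx) ×ˢ Icc a₂ (a₂ + hy) ⊆ U) (hv : ContDiffOn ℝ 3 v U) {x y : ℝ}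
    (hx_mem : x ∈ Icc a₁ (a₁ + hx)) (hy_mem : y ∈ Icc a₂ (a₂ + hy)) :
    |quadInterpDeriv a₁ hx (fun s => v (s, y)) x -
        quadInterp a₂ hy (fun t => quadInterpDeriv a₁ hx (fun s => v (s, t)) x) y| ≤
      12 * (hy / hx) * ∫ z in Icc a₁ (a₁ + hx) ×ˢ Icc a₂ (a₂ + hy), |Dm (1, 2) v z| := by
  have hvy : ContDiffOn ℝ 2 (pdy v) U := contDiffOn_pdy hU hv (by norm_num)
  have hvyy : ContDiffOn ℝ 1 (pdy (pdy v)) U := contDiffOn_pdy hU hvy (by norm_num)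
  have hasDeriv {f : ℝ × ℝ → ℝ} {n : WithTop ℕ∞} (hf : ContDiffOn ℝ n f U) (hn : n ≠ 0) :
      ∀ t ∈ Icc a₂ (a₂ + hy), HasDerivAt (fun t => quadInterpDeriv a₁ hx (fun s => f (s, t)) x)
        (quadInterpDeriv a₁ hx (fun s => pdy f (s, t)) x) t := fun t ht =>
    hasDerivAt_quadInterpDeriv_param hhx.le (fun s hs => hasDerivAt_pdy
      ((hf.differentiableOn hn).differentiableAt (hU.mem_nhds (hT ⟨hs, ht⟩)))) x
  have hcont : ContinuousOn (fun t => quadInterpDeriv a₁ hx (fun s => pdy (pdy v) (s, t)) x)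
      (Icc a₂ (a₂ + hy)) := continuousOn_quadInterpDeriv_param hhx.le
    (fun s hs => continuousOn_slice_snd hvyy.continuousOn fun t ht => hT ⟨hs, ht⟩) x
  calc |quadInterpDeriv a₁ hx (fun s => v (s, y)) x -
        quadInterp a₂ hy (fun t => quadInterpDeriv a₁ hx (fun s => v (s, t)) x) y|
      ≤ 2 * hy * ∫ t in Icc a₂ (a₂ + hy),
          |quadInterpDeriv a₁ hx (fun s => pdy (pdy v) (s, t)) x| :=
        abs_sub_quadInterp_le hhy (hasDeriv hv (by norm_num)) (hasDeriv hvy (by norm_num))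
          hcont hy_mem
    _ ≤ 2 * hy * (6 / hx *
          ∫ z in Icc a₁ (a₁ + hx) ×ˢ Icc a₂ (a₂ + hy), |pdx (pdy (pdy v)) z|) := by
        gcongr
        exact setIntegral_abs_quadInterpDeriv_le hhx hU hT hvyy hx_mem
    _ = 12 * (hy / hx) * ∫ z in Icc a₁ (a₁ + hx) ×ˢ Icc a₂ (a₂ + hy), |Dm (1, 2) v z| := by
        rw [show Dm (1, 2) v = pdx (pdy (pdy v)) from rfl]
        ring

lemma abs_pdx_sub_biquadratic_le (hhx : 0 < hx) (hhy : 0 < hy) (hU : IsOpen U)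
    (hT : Icc a₁ (a₁ + hx) ×ˢ Icc a₂ (a₂ + hy) ⊆ U) (hv : ContDiffOn ℝ 3 v U)
    (hq : IsBiquadraticInterpolant a₁ a₂ hx hy v q) {x y : ℝ}
    (hx_mem : x ∈ Icc a₁ (a₁ + hx)) (hy_mem : y ∈ Icc a₂ (a₂ + hy)) :
    |pdx (fun z => v z - q z) (x, y)| ≤
      hx * (∫ s in Icc a₁ (a₁ + hx), |Dm (3, 0) v (s, y)|) +
        12 * (hy / hx) * ∫ z in Icc a₁ (a₁ + hx) ×ˢ Icc a₂ (a₂ + hy), |Dm (1, 2) v z| := by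
  rw [hq.pdx_sub hhx.ne' hhy.ne'
    ((hv.differentiableOn three_ne_zero).differentiableAt (hU.mem_nhds (hT ⟨hx_mem, hy_mem⟩)))]
  exact (abs_sub_le _ _ _).trans <| add_le_add
    (abs_pdx_sub_quadInterpDeriv_le hhx hU hv (fun s hs => hT ⟨hs, hy_mem⟩) hx_mem)
    (abs_quadInterpDeriv_sub_quadInterp_le hhx hhy hU hT hv hx_mem hy_mem)

lemma sq_pdx_sub_biquadratic_le (hhx : 0 < hx) (hhy : 0 < hy) (hU : IsOpen U)
    (hT : Icc a₁ (a₁ + hx) ×ˢ Icc a₂ (a₂ + hy) ⊆ U) (hv : ContDiffOn ℝ 3 v U)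
    (hq : IsBiquadraticInterpolant a₁ a₂ hx hy v q) {x y : ℝ}
    (hx_mem : x ∈ Icc a₁ (a₁ + hx)) (hy_mem : y ∈ Icc a₂ (a₂ + hy)) :
    pdx (fun z => v z - q z) (x, y) ^ 2 ≤
      2 * hx ^ 3 * (∫ s in Icc a₁ (a₁ + hx), Dm (3, 0) v (s, y) ^ 2) +
        288 * (hy ^ 3 / hx) *
          ∫ z in Icc a₁ (a₁ + hx) ×ˢ Icc a₂ (a₂ + hy), Dm (1, 2) v z ^ 2 := by
  have hF : ContinuousOn (fun s => Dm (3, 0) v (s, y)) (Icc a₁ (a₁ + hx)) :=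
    continuousOn_slice_fst (continuousOn_Dm hU hv (by norm_num)) fun s hs => hT ⟨hs, hy_mem⟩
  have hG : ContinuousOn (Dm (1, 2) v) (Icc a₁ (a₁ + hx) ×ˢ Icc a₂ (a₂ + hy)) :=
    (continuousOn_Dm hU hv (by norm_num)).mono hT
  have hcompact : IsCompact (Icc a₁ (a₁ + hx) ×ˢ Icc a₂ (a₂ + hy)) :=
    isCompact_Icc.prod isCompact_Icc
  have line_cauchy_schwarz : (∫ s in Icc a₁ (a₁ + hx), |Dm (3, 0) v (s, y)|) ^ 2 ≤
      hx * ∫ s in Icc a₁ (a₁ + hx), Dm (3, 0) v (s, y) ^ 2 := by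
    simpa only [sq_abs, Real.volume_real_Icc_of_le (le_add_of_nonneg_right hhx.le),
      add_sub_cancel_left] using sq_setIntegral_le (μ := volume)
        isCompact_Icc.measure_ne_top hF.abs.integrableOn_Icc (hF.abs.pow 2).integrableOn_Icc
  have rectangle_cauchy_schwarz :
      (∫ z in Icc a₁ (a₁ + hx) ×ˢ Icc a₂ (a₂ + hy), |Dm (1, 2) v z|) ^ 2 ≤
        hx * hy * ∫ z in Icc a₁ (a₁ + hx) ×ˢ Icc a₂ (a₂ + hy), Dm (1, 2) v z ^ 2 := by
    simpa only [sq_abs, volume_real_Icc_prod_Icc hhx.le hhy.le] using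
      sq_setIntegral_le (μ := volume) hcompact.measure_ne_top
        (hG.abs.integrableOn_compact hcompact) ((hG.abs.pow 2).integrableOn_compact hcompact)
  have herror := abs_pdx_sub_biquadratic_le hhx hhy hU hT hv hq hx_mem hy_mem
  set A := ∫ s in Icc a₁ (a₁ + hx), |Dm (3, 0) v (s, y)|
  set B := ∫ z in Icc a₁ (a₁ + hx) ×ˢ Icc a₂ (a₂ + hy), |Dm (1, 2) v z|
  calc pdx (fun z => v z - q z) (x, y) ^ 2
      ≤ (hx * A + 12 * (hy / hx) * B) ^ 2 := by rw [← sq_abs]; gcongr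
    _ ≤ 2 * ((hx * A) ^ 2 + (12 * (hy / hx) * B) ^ 2) := add_sq_le
    _ = 2 * hx ^ 2 * A ^ 2 + 288 * (hy / hx) ^ 2 * B ^ 2 := by ring
    _ ≤ 2 * hx ^ 2 * (hx * ∫ s in Icc a₁ (a₁ + hx), Dm (3, 0) v (s, y) ^ 2) +
        288 * (hy / hx) ^ 2 * (hx * hy *
          ∫ z in Icc a₁ (a₁ + hx) ×ˢ Icc a₂ (a₂ + hy), Dm (1, 2) v z ^ 2) := by gcongr
    _ = _ := by field_simp

lemma setIntegral_sq_pdx_sub_biquadratic_le (hhx : 0 < hx) (hhy : 0 < hy) (hU : IsOpen U)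
    (hT : Icc a₁ (a₁ + hx) ×ˢ Icc a₂ (a₂ + hy) ⊆ U) (hv : ContDiffOn ℝ 3 v U)
    (hq : IsBiquadraticInterpolant a₁ a₂ hx hy v q) {x₁ x₂ : ℝ}
    (hx₁ : x₁ ∈ Icc a₁ (a₁ + hx)) (hx₂ : x₂ ∈ Icc a₁ (a₁ + hx)) :
    ∫ y in Icc a₂ (a₂ + hy), (pdx (fun z => v z - q z) (x₁, y) ^ 2 +
        pdx (fun z => v z - q z) (x₂, y) ^ 2) ≤
      4 * (hx ^ 3 * ∫ z in Icc a₁ (a₁ + hx) ×ˢ Icc a₂ (a₂ + hy), Dm (3, 0) v z ^ 2) +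
        576 * (hy ^ 4 / hx * ∫ z in Icc a₁ (a₁ + hx) ×ˢ Icc a₂ (a₂ + hy), Dm (1, 2) v z ^ 2) := by
  have hF : IntegrableOn (fun z => Dm (3, 0) v z ^ 2) (Icc a₁ (a₁ + hx) ×ˢ Icc a₂ (a₂ + hy))
      (volume.prod volume) :=
    (((continuousOn_Dm hU hv (by norm_num)).mono hT).pow 2).integrableOn_compact
      (isCompact_Icc.prod isCompact_Icc)
  have hF_lines : IntegrableOn (fun y => 4 * hx ^ 3 *
      ∫ s in Icc a₁ (a₁ + hx), Dm (3, 0) v (s, y) ^ 2) (Icc a₂ (a₂ + hy)) :=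
    (integrableOn_setIntegral_fst hF).const_mul _
  set N := ∫ z in Icc a₁ (a₁ + hx) ×ˢ Icc a₂ (a₂ + hy), Dm (1, 2) v z ^ 2
  have hconst : IntegrableOn (fun _ : ℝ => 576 * (hy ^ 3 / hx) * N) (Icc a₂ (a₂ + hy)) :=
    continuousOn_const.integrableOn_Icc
  have hpointwise : ∀ y ∈ Icc a₂ (a₂ + hy), pdx (fun z => v z - q z) (x₁, y) ^ 2 +
      pdx (fun z => v z - q z) (x₂, y) ^ 2 ≤
        4 * hx ^ 3 * (∫ s in Icc a₁ (a₁ + hx), Dm (3, 0) v (s, y) ^ 2) +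
          576 * (hy ^ 3 / hx) * N := fun y hy_mem => by
    linarith [sq_pdx_sub_biquadratic_le hhx hhy hU hT hv hq hx₁ hy_mem,
      sq_pdx_sub_biquadratic_le hhx hhy hU hT hv hq hx₂ hy_mem]
  calc ∫ y in Icc a₂ (a₂ + hy), (pdx (fun z => v z - q z) (x₁, y) ^ 2 +
        pdx (fun z => v z - q z) (x₂, y) ^ 2)
      ≤ ∫ y in Icc a₂ (a₂ + hy), (4 * hx ^ 3 *
          (∫ s in Icc a₁ (a₁ + hx), Dm (3, 0) v (s, y) ^ 2) + 576 * (hy ^ 3 / hx) * N) :=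
        integral_mono_of_nonneg (.of_forall fun y => by positivity) (Integrable.add hF_lines hconst)
          (ae_restrict_of_forall_mem measurableSet_Icc hpointwise)
    _ = 4 * hx ^ 3 * (∫ z in Icc a₁ (a₁ + hx) ×ˢ Icc a₂ (a₂ + hy), Dm (3, 0) v z ^ 2) +
        hy * (576 * (hy ^ 3 / hx) * N) := by
        rw [integral_add hF_lines hconst, integral_const_mul, Measure.volume_eq_prod,
          setIntegral_prod_symm hF, setIntegral_const,
          Real.volume_real_Icc_of_le (le_add_of_nonneg_right hhy.le), add_sub_cancel_left,
          smul_eq_mul]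
    _ = _ := by ring

end BiquadraticInterpolation

lemma sq_L2R (R : Set (ℝ × ℝ)) (f : ℝ × ℝ → ℝ) : L2R R f ^ 2 = ∫ z in R, f z ^ 2 :=
  Real.sq_sqrt (integral_nonneg fun _ => sq_nonneg _)

lemma L2R_nonneg (R : Set (ℝ × ℝ)) (f : ℝ × ℝ → ℝ) : 0 ≤ L2R R f := Real.sqrt_nonneg _

theorem biquadratic_trace_estimate_general {a₁ a₂ hx hy : ℝ} (hhx : 0 < hx) (hhy : 0 < hy)
    {v q : ℝ × ℝ → ℝ} {U : Set (ℝ × ℝ)} (hU : IsOpen U)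
    (hT : Icc (a₁, a₂) (a₁ + hx, a₂ + hy) ⊆ U) (hv : ContDiffOn ℝ 3 v U)
    (hq : IsBiquadraticInterpolant a₁ a₂ hx hy v q) {x₁ x₂ : ℝ}
    (hx₁ : x₁ ∈ Icc a₁ (a₁ + hx)) (hx₂ : x₂ ∈ Icc a₁ (a₁ + hx)) :
    √(∫ y in Icc a₂ (a₂ + hy), (pdx (fun z => v z - q z) (x₁, y) ^ 2 +
        pdx (fun z => v z - q z) (x₂, y) ^ 2)) ≤
      24 * (hx * √hx * L2R (Icc (a₁, a₂) (a₁ + hx, a₂ + hy)) (Dm (3, 0) v) +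
        hy ^ 2 / √hx * L2R (Icc (a₁, a₂) (a₁ + hx, a₂ + hy)) (Dm (1, 2) v)) := by
  have hintegral := setIntegral_sq_pdx_sub_biquadratic_le hhx hhy hU
    (by rwa [Icc_prod_Icc]) hv hq hx₁ hx₂
  rw [Icc_prod_Icc, ← sq_L2R, ← sq_L2R] at hintegral
  set A := L2R (Icc (a₁, a₂) (a₁ + hx, a₂ + hy)) (Dm (3, 0) v)
  set B := L2R (Icc (a₁, a₂) (a₁ + hx, a₂ + hy)) (Dm (1, 2) v)
  have hA : 0 ≤ A := L2R_nonneg _ _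
  have hB : 0 ≤ B := L2R_nonneg _ _
  have hA_sq : (hx * √hx * A) ^ 2 = hx ^ 3 * A ^ 2 := by
    rw [mul_pow, mul_pow, Real.sq_sqrt hhx.le]; ring
  have hB_sq : (hy ^ 2 / √hx * B) ^ 2 = hy ^ 4 / hx * B ^ 2 := by
    rw [mul_pow, div_pow, Real.sq_sqrt hhx.le]; ring
  rw [← hA_sq, ← hB_sq] at hintegral
  refine Real.sqrt_le_iff.2 ⟨by positivity, hintegral.trans ?_⟩
  have hcross : 0 ≤ hx * √hx * A * (hy ^ 2 / √hx * B) := by positivity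
  nlinarith [sq_nonneg (hx * √hx * A)]

/-- trace estimate for the `x`-derivative of the biquadratic nodal
interpolation error on the two edges of `T = [a₁, a₁+h_x] × [a₂, a₂+h_y]` parallel
to the `y`-axis. -/
theorem biquadratic_trace_estimate :
    ∃ C : ℝ, 0 < C ∧
      ∀ (a₁ a₂ hx hy : ℝ), 0 < hx → 0 < hy →
      ∀ (v : ℝ × ℝ → ℝ) (U : Set (ℝ × ℝ)), IsOpen U →
        Set.Icc (a₁, a₂) (a₁ + hx, a₂ + hy) ⊆ U → ContDiffOn ℝ 3 v U →
      ∀ q : ℝ × ℝ → ℝ,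
        (∃ co : Fin 3 → Fin 3 → ℝ,
          q = fun z => ∑ i : Fin 3, ∑ j : Fin 3, co i j * z.1 ^ (i : ℕ) * z.2 ^ (j : ℕ)) →
        (∀ i j : Fin 3,
          q (a₁ + (i : ℕ) * hx / 2, a₂ + (j : ℕ) * hy / 2) =
            v (a₁ + (i : ℕ) * hx / 2, a₂ + (j : ℕ) * hy / 2)) →
        Real.sqrt (∫ y in Set.Icc a₂ (a₂ + hy),
            ((pdx (fun z => v z - q z) (a₁, y)) ^ 2 +
              (pdx (fun z => v z - q z) (a₁ + hx, y)) ^ 2)) ≤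
          C * (hx * Real.sqrt hx * L2R (Set.Icc (a₁, a₂) (a₁ + hx, a₂ + hy)) (Dm (3, 0) v) +
            Real.sqrt hx * hy * L2R (Set.Icc (a₁, a₂) (a₁ + hx, a₂ + hy)) (Dm (2, 1) v) +
            hy ^ 2 / Real.sqrt hx * L2R (Set.Icc (a₁, a₂) (a₁ + hx, a₂ + hy)) (Dm (1, 2) v)) := by
  refine ⟨24, by norm_num, fun a₁ a₂ hx hy hhx hhy v U hU hT hv q hq hn => ?_⟩
  refine (biquadratic_trace_estimate_general hhx hhy hU hT hv ⟨hq, hn⟩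
    (left_mem_Icc.2 (by linarith)) (right_mem_Icc.2 (by linarith))).trans ?_
  have hmixed := mul_nonneg (mul_nonneg (Real.sqrt_nonneg hx) hhy.le)
    (L2R_nonneg (Icc (a₁, a₂) (a₁ + hx, a₂ + hy)) (Dm (2, 1) v))
  linarith
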